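/- Let L be an ideal lattice in which every element is semi-prime. Then the adjunction morphism L → L_open(Spec L), a ↦ D(a), is an isomorphism of ideal lattices: it is an order isomorphism from L onto the lattice of open subsets of Spec L which sends suprema to unions, sends the product ab to D(a) ∩ D(b), and sends 1 to Spec L. -/

import Mathlib

open CompleteLattice TopologicalSpace

/-- An ideal lattice: a complete, compactly generated lattice with an associative
multiplication distributing over finite suprema, for which `⊤` is a compact
two-sided identity and products of compact elements are compact. -/
structure IsIdealLattice (α : Type*) [CompleteLattice α] [Mul α] : Prop where
  mul_assoc : ∀ a b c : α, a * b * c = a * (b * c)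
  compactlyGenerated : ∀ a : α, a = sSup {b : α | b ≤ a ∧ IsCompactElement b}
  mul_sup : ∀ a b c : α, a * (b ⊔ c) = a * b ⊔ a * c
  sup_mul : ∀ a b c : α, (a ⊔ b) * c = a * c ⊔ b * c
  top_compact : IsCompactElement (⊤ : α)
  top_mul : ∀ a : α, ⊤ * a = a
  mul_top : ∀ a : α, a * ⊤ = a
  compact_mul : ∀ a b : α, IsCompactElement a → IsCompactElement b → IsCompactElement (a * b)

/-- A prime element of an ideal lattice: `p ≠ ⊤` and `a * b ≤ p` implies `a ≤ p` or `b ≤ p`. -/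
def IsPrimeElt {α : Type*} [CompleteLattice α] [Mul α] (p : α) : Prop :=
  p ≠ ⊤ ∧ ∀ a b : α, a * b ≤ p → a ≤ p ∨ b ≤ p

/-- A semi-prime element of an ideal lattice: `b * b ≤ a` implies `b ≤ a`. -/
def IsSemiprimeElt {α : Type*} [CompleteLattice α] [Mul α] (a : α) : Prop :=
  ∀ b : α, b * b ≤ a → b ≤ a

/-- The prime spectrum of an ideal lattice: the set of prime elements. -/
def SpecL (α : Type*) [CompleteLattice α] [Mul α] : Type _ := {p : α // IsPrimeElt p}

/-- The Zariski-closed set `V(a) = {p ∈ Spec L : a ≤ p}`. -/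
def zV {α : Type*} [CompleteLattice α] [Mul α] (a : α) : Set (SpecL α) := {p | a ≤ p.1}

/-- The Zariski-open set `D(a) = {p ∈ Spec L : a ≰ p}`. -/
def zD {α : Type*} [CompleteLattice α] [Mul α] (a : α) : Set (SpecL α) := {p | ¬ a ≤ p.1}

/-- The Zariski topology on `SpecL α`: the open sets are exactly the sets `zD a`. -/
instance {α : Type*} [CompleteLattice α] [Mul α] : TopologicalSpace (SpecL α) :=
  TopologicalSpace.generateFrom {U : Set (SpecL α) | ∃ a : α, U = zD a}

/-!
If `a ≰ b`, pick a compact `c ≤ a` with `c ≰ b`. By Zorn's lemma there is `p ≥ b` maximal among the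
elements not above `c`, and such a `p` is inf-irreducible. As for ideals in rings, a semi-prime
inf-irreducible element is prime: if `x * y ≤ p`, then `z = (p ⊔ x) ⊓ (p ⊔ y)` satisfies
`z * z ≤ p`, hence `z = p`. Thus primes separate elements, so `a ↦ D(a)` is an order embedding. It
is onto because the sets `D(a)` are closed under unions and finite intersections.
-/

/-- A multiplication on a lattice which distributes over binary suprema and whose products lie below
both factors. This is the part of the structure of an ideal lattice that relates multiplication to
the order; the bounds `a * b ≤ a` and `a * b ≤ b` encode integrality without naming an identity. -/
structure IsMultiplicativeLattice (α : Type*) [Lattice α] [Mul α] : Prop where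
  mul_sup : ∀ a b c : α, a * (b ⊔ c) = a * b ⊔ a * c
  sup_mul : ∀ a b c : α, (a ⊔ b) * c = a * c ⊔ b * c
  mul_le_left : ∀ a b : α, a * b ≤ a
  mul_le_right : ∀ a b : α, a * b ≤ b

namespace IsIdealLattice

variable {α : Type*} [CompleteLattice α] [Mul α]

theorem isMultiplicativeLattice (hL : IsIdealLattice α) : IsMultiplicativeLattice α where
  mul_sup := hL.mul_sup
  sup_mul := hL.sup_mul
  mul_le_left a b :=
    calc a * b ≤ a * b ⊔ a * ⊤ := le_sup_left
      _ = a := by rw [← hL.mul_sup, sup_top_eq, hL.mul_top]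
  mul_le_right a b :=
    calc a * b ≤ a * b ⊔ ⊤ * b := le_sup_left
      _ = b := by rw [← hL.sup_mul, sup_top_eq, hL.top_mul]

theorem isCompactlyGenerated (hL : IsIdealLattice α) : IsCompactlyGenerated α where
  exists_sSup_eq a := ⟨_, fun _ hb => hb.2, (hL.compactlyGenerated a).symm⟩

end IsIdealLattice

theorem infIrred_of_maximal_not_le {α : Type*} [Lattice α] {c p : α}
    (hp : Maximal (fun x => ¬ c ≤ x) p) : InfIrred p := by
  refine ⟨fun hmax => hp.prop (le_sup_right.trans (hmax le_sup_left)), fun x y hxy => ?_⟩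
  have le_of_ne {z : α} (hpz : p ≤ z) (hz : z ≠ p) : c ≤ z := by
    by_contra hcz
    exact hz (hp.eq_of_ge hcz hpz)
  by_contra! hne
  refine hp.prop (hxy ▸ le_inf ?_ ?_)
  · exact le_of_ne (hxy ▸ inf_le_left) hne.1
  · exact le_of_ne (hxy ▸ inf_le_right) hne.2

section CompleteLattice

variable {α : Type*} [CompleteLattice α]

theorem exists_maximal_not_le_of_isCompactElement {b c : α} (hc : IsCompactElement c)
    (hcb : ¬ c ≤ b) : ∃ p, b ≤ p ∧ Maximal (fun x => ¬ c ≤ x) p := by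
  refine zorn_le_nonempty₀ {x | ¬ c ≤ x} (fun s hs hchain y hy => ?_) b hcb
  refine ⟨sSup s, fun hcs => ?_, fun _ => le_sSup⟩
  obtain ⟨x, hxs, hcx⟩ := hc s (sSup s) ⟨y, hy⟩ hchain.directedOn (_root_.isLUB_sSup s) hcs
  exact hs hxs hcx

theorem exists_infIrred_ge_not_ge [IsCompactlyGenerated α] {a b : α} (hab : ¬ a ≤ b) :
    ∃ p, InfIrred p ∧ b ≤ p ∧ ¬ a ≤ p := by
  obtain ⟨c, hc, hca, hcb⟩ : ∃ c, IsCompactElement c ∧ c ≤ a ∧ ¬ c ≤ b := by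
    simpa only [le_iff_compact_le_imp (a := a), not_forall, exists_prop] using hab
  obtain ⟨p, hbp, hp⟩ := exists_maximal_not_le_of_isCompactElement hc hcb
  exact ⟨p, infIrred_of_maximal_not_le hp, hbp, fun hap => hp.prop (hca.trans hap)⟩

end CompleteLattice

namespace IsMultiplicativeLattice

section Lattice

variable {α : Type*} [Lattice α] [Mul α]

theorem mul_le_mul (hα : IsMultiplicativeLattice α) {a b c d : α} (hab : a ≤ b) (hcd : c ≤ d) :
    a * c ≤ b * d :=
  calc a * c ≤ a * c ⊔ b * c := le_sup_left
    _ = b * c := by rw [← hα.sup_mul, sup_eq_right.2 hab]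
    _ ≤ b * c ⊔ b * d := le_sup_left
    _ = b * d := by rw [← hα.mul_sup, sup_eq_right.2 hcd]

theorem sup_mul_sup_le (hα : IsMultiplicativeLattice α) (p x y : α) :
    (p ⊔ x) * (p ⊔ y) ≤ p ⊔ x * y :=
  calc (p ⊔ x) * (p ⊔ y) = (p ⊔ x) * p ⊔ (p * y ⊔ x * y) := by rw [hα.mul_sup, hα.sup_mul p x y]
    _ ≤ p ⊔ (p ⊔ x * y) :=
      sup_le_sup (hα.mul_le_right _ _) (sup_le_sup_right (hα.mul_le_left _ _) _)
    _ = p ⊔ x * y := by rw [← sup_assoc, sup_idem]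

end Lattice

section CompleteLattice

variable {α : Type*} [CompleteLattice α] [Mul α]

theorem isPrimeElt_of_infIrred (hα : IsMultiplicativeLattice α) {p : α} (hp : InfIrred p)
    (hsp : IsSemiprimeElt p) : IsPrimeElt p := by
  refine ⟨fun htop => hp.1 (htop ▸ isMax_top), fun x y hxy => ?_⟩
  set z := (p ⊔ x) ⊓ (p ⊔ y)
  have hzz : z * z ≤ p :=
    calc z * z ≤ (p ⊔ x) * (p ⊔ y) := hα.mul_le_mul inf_le_left inf_le_right
      _ ≤ p ⊔ x * y := hα.sup_mul_sup_le p x y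
      _ = p := sup_eq_left.2 hxy
  have hzp : z = p := (hsp z hzz).antisymm (le_inf le_sup_left le_sup_left)
  exact (hp.2 hzp).imp sup_eq_left.1 sup_eq_left.1

theorem exists_isPrimeElt_ge_not_ge [IsCompactlyGenerated α] (hα : IsMultiplicativeLattice α)
    (hsp : ∀ a : α, IsSemiprimeElt a) {a b : α} (hab : ¬ a ≤ b) :
    ∃ p, IsPrimeElt p ∧ b ≤ p ∧ ¬ a ≤ p := by
  obtain ⟨p, hp, hbp, hap⟩ := exists_infIrred_ge_not_ge hab
  exact ⟨p, hα.isPrimeElt_of_infIrred hp (hsp p), hbp, hap⟩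

theorem zD_subset_zD_iff [IsCompactlyGenerated α] (hα : IsMultiplicativeLattice α)
    (hsp : ∀ a : α, IsSemiprimeElt a) {a b : α} :
    (zD a : Set (SpecL α)) ⊆ zD b ↔ a ≤ b := by
  refine ⟨fun hsub => ?_, fun hab p hap hbp => hap (hab.trans hbp)⟩
  by_contra hab
  obtain ⟨p, hp, hbp, hap⟩ := hα.exists_isPrimeElt_ge_not_ge hsp hab
  exact hsub (a := ⟨p, hp⟩) hap hbp

theorem zD_mul (hα : IsMultiplicativeLattice α) (a b : α) :
    (zD (a * b) : Set (SpecL α)) = zD a ∩ zD b := by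
  ext p
  have mul_le_iff : a * b ≤ p.1 ↔ a ≤ p.1 ∨ b ≤ p.1 :=
    ⟨p.2.2 a b, Or.rec (hα.mul_le_left a b).trans (hα.mul_le_right a b).trans⟩
  exact mul_le_iff.not.trans not_or

end CompleteLattice

end IsMultiplicativeLattice

section Spectrum

variable {α : Type*} [CompleteLattice α] [Mul α]

theorem zD_sSup (A : Set α) : (zD (sSup A) : Set (SpecL α)) = ⋃ a ∈ A, zD a := by
  ext p
  simp only [zD, sSup_le_iff, not_forall, exists_prop, Set.mem_ofPred_eq, Set.mem_iUnion]

theorem zD_top : (zD (⊤ : α) : Set (SpecL α)) = Set.univ :=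
  Set.eq_univ_of_forall fun p htop => p.2.1 (top_le_iff.1 htop)

theorem isOpen_zD (a : α) : IsOpen (zD a : Set (SpecL α)) :=
  isOpen_generateFrom_of_mem ⟨a, rfl⟩

theorem IsMultiplicativeLattice.exists_zD_eq_of_isOpen (hα : IsMultiplicativeLattice α)
    {U : Set (SpecL α)} (hU : IsOpen U) : ∃ a : α, zD a = U := by
  induction hU with
  | basic U hU => exact hU.imp fun _ => Eq.symm
  | univ => exact ⟨⊤, zD_top⟩
  | inter U V _ _ hU hV =>
    obtain ⟨a, rfl⟩ := hU
    obtain ⟨b, rfl⟩ := hV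
    exact ⟨a * b, hα.zD_mul a b⟩
  | sUnion S _ hS =>
    exact ⟨sSup (zD ⁻¹' S), by
      rw [zD_sSup, ← Set.sUnion_image, Set.image_preimage_eq_of_subset hS]⟩

end Spectrum

theorem adjunction_iso_of_all_semiprime_general {α : Type*} [CompleteLattice α]
    [IsCompactlyGenerated α] [Mul α] (hα : IsMultiplicativeLattice α)
    (hsp : ∀ a : α, IsSemiprimeElt a) :
    ∃ e : α ≃o Opens (SpecL α),
      (∀ a : α, ((e a : Opens (SpecL α)) : Set (SpecL α)) = zD a) ∧
      (∀ A : Set α, ((e (sSup A) : Opens (SpecL α)) : Set (SpecL α)) = ⋃ a ∈ A, zD a) ∧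
      (∀ a b : α, ((e (a * b) : Opens (SpecL α)) : Set (SpecL α)) = zD a ∩ zD b) ∧
      ((e ⊤ : Opens (SpecL α)) : Set (SpecL α)) = Set.univ := by
  let D : α ↪o Opens (SpecL α) :=
    OrderEmbedding.ofMapLEIff (fun a => ⟨zD a, isOpen_zD a⟩) fun _ _ => hα.zD_subset_zD_iff hsp
  have D_surjective : Function.Surjective D := fun U =>
    (hα.exists_zD_eq_of_isOpen U.isOpen).imp fun _ hU => Opens.ext hU
  exact ⟨RelIso.ofSurjective D D_surjective, fun _ => rfl, zD_sSup, hα.zD_mul, zD_top⟩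

/-- If every element of the ideal lattice `L` is semi-prime, then `a ↦ D(a)` is an
isomorphism of ideal lattices from `L` onto the lattice of open subsets of `Spec L`:
an order isomorphism sending suprema to unions, products to intersections, and `⊤` to
the whole space. -/
theorem adjunction_iso_of_all_semiprime {α : Type*} [CompleteLattice α] [Mul α]
    (hL : IsIdealLattice α) (hsp : ∀ a : α, IsSemiprimeElt a) :
    ∃ e : α ≃o Opens (SpecL α),
      (∀ a : α, ((e a : Opens (SpecL α)) : Set (SpecL α)) = zD a) ∧
      (∀ A : Set α, ((e (sSup A) : Opens (SpecL α)) : Set (SpecL α)) = ⋃ a ∈ A, zD a) ∧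
      (∀ a b : α, ((e (a * b) : Opens (SpecL α)) : Set (SpecL α)) = zD a ∩ zD b) ∧
      ((e ⊤ : Opens (SpecL α)) : Set (SpecL α)) = Set.univ := by
  have := hL.isCompactlyGenerated
  exact adjunction_iso_of_all_semiprime_general hL.isMultiplicativeLattice hsp
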